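/- arXiv:math/0302003 — 3 statements merged into one kernel-verified Lean document; each statement's English description precedes it below -/
import Mathlib

section
/- Let k be a commutative ring, B a commutative k-algebra, H a k-bialgebra, and A a B-algebra (so B maps centrally into A) which is also a right H-comodule algebra with B-linear coaction. Assume A is faithfully flat as a k-module and that the Galois map β_A : A ⊗_B A → A ⊗_k H, β_A(x ⊗ y) = x·y₍₀₎ ⊗ y₍₁₎, is bijective. Then H is a Hopf algebra, i.e. the bialgebra H admits an antipode. -/
open scoped TensorProduct

/-- The Galois map `A ⊗ A → A ⊗ H`, `x ⊗ y ↦ x·y₍₀₎ ⊗ y₍₁₎`, associated to a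
coaction-like linear map `δ : A → A ⊗ H`. -/
noncomputable def coactionGalois (k A H : Type) [CommRing k] [Ring A] [Algebra k A]
    [AddCommGroup H] [Module k H] (δ : A →ₗ[k] A ⊗[k] H) :
    (A ⊗[k] A) →ₗ[k] A ⊗[k] H :=
  LinearMap.rTensor H (LinearMap.mul' k A) ∘ₗ
    (TensorProduct.assoc k A A H).symm.toLinearMap ∘ₗ LinearMap.lTensor A δ

/-!
Changing scalars along `A →ₐ[B] R` turns the `A`-linear bijection `β : A ⊗[B] A → A ⊗[k] H` into an
`R`-linear bijection `R ⊗[B] A → R ⊗[k] H`, for any `R`. Take `R = A ⊗[k] H` and the two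
homomorphisms `a ↦ a ⊗ 1` and `δ`: by coassociativity the two resulting bijections differ by the map
`a ⊗ g ⊗ h ↦ a ⊗ g h₍₁₎ ⊗ h₍₂₎`, which is therefore bijective. By faithful flatness so is
`g ⊗ h ↦ g h₍₁₎ ⊗ h₍₂₎`. Finally, `H`-linear maps `H ⊗ H → H` are the same as `k`-linear maps
`H → H`, and under this identification precomposition with `g ⊗ h ↦ g h₍₁₎ ⊗ h₍₂₎` is left
convolution by `id`. So `id` is convolution-invertible, and its inverse is the antipode.
-/

open TensorProduct WithConv

section ScalarExtension

variable {S R M P : Type*} [CommSemiring S] [Semiring R] [Algebra S R]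
  [AddCommMonoid M] [Module S M] [AddCommMonoid P] [Module S P] [Module R P] [IsScalarTower S R P]

/-- The adjunction between extension and restriction of scalars along `S → R`: an `S`-linear map
`ψ : M → P` corresponds to the `R`-linear map `R ⊗ M → P`, `r ⊗ m ↦ r • ψ m`. Unlike in
`LinearMap.liftBaseChangeEquiv`, the algebra `R` need not be commutative. -/
noncomputable def liftScalars : (M →ₗ[S] P) ≃ₗ[S] (R ⊗[S] M →ₗ[R] P) :=
  (LinearMap.ringLmapEquivSelf R S (M →ₗ[S] P)).symm ≪≫ₗ
    AlgebraTensorModule.lift.equiv S R S R M P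

@[simp]
theorem liftScalars_tmul (ψ : M →ₗ[S] P) (r : R) (m : M) :
    liftScalars ψ (r ⊗ₜ[S] m) = r • ψ m :=
  rfl

@[simp]
theorem liftScalars_symm_apply (φ : R ⊗[S] M →ₗ[R] P) (m : M) :
    liftScalars.symm φ m = φ (1 ⊗ₜ m) :=
  rfl

variable {A Q : Type*} [Semiring A] [Algebra S A] [AddCommMonoid Q] [Module S Q] [Module A Q]
  [IsScalarTower S A Q]

theorem rTensor_algHom_smul (f : A →ₐ[S] R) (a : A) (w : A ⊗[S] M) :
    f.toLinearMap.rTensor M (a • w) = f a • f.toLinearMap.rTensor M w := by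
  induction w with
  | zero => simp
  | add v w hv hw => simp only [smul_add, map_add, hv, hw]
  | tmul b m => simp [smul_tmul']

theorem liftScalars_comp_rTensor_algHom (f : A →ₐ[S] R) (τ : Q →ₗ[S] P)
    (hτ : ∀ a q, τ (a • q) = f a • τ q) (ψ : M →ₗ[S] Q) (w : A ⊗[S] M) :
    liftScalars (τ ∘ₗ ψ) (f.toLinearMap.rTensor M w) = τ (liftScalars ψ w) := by
  induction w with
  | zero => simp
  | add v w hv hw => simp only [map_add, hv, hw]
  | tmul a m => simp [hτ]

end ScalarExtension

section ChangeOfScalars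

variable {k B A R M N : Type*} [CommSemiring k] [CommSemiring B] [Algebra k B]
  [Semiring A] [Algebra k A] [Algebra B A] [IsScalarTower k B A]
  [Semiring R] [Algebra k R] [Algebra B R] [IsScalarTower k B R]
  [AddCommMonoid M] [Module B M] [AddCommMonoid N] [Module k N]

theorem bijective_liftScalars_rTensor_comp (f : A →ₐ[B] R) {ψ : M →ₗ[B] A ⊗[k] N}
    (hψ : Function.Bijective (liftScalars (R := A) ψ)) :
    Function.Bijective
      (liftScalars (R := R) (AlgebraTensorModule.rTensor k N f.toLinearMap ∘ₗ ψ)) := by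
  let e := LinearEquiv.ofBijective _ hψ
  let χ : N →ₗ[k] A ⊗[B] M := liftScalars.symm e.symm.toLinearMap
  let fM : A ⊗[B] M →ₗ[k] R ⊗[B] M := (f.toLinearMap.rTensor M).restrictScalars k
  let fN : A ⊗[k] N →ₗ[B] R ⊗[k] N := AlgebraTensorModule.rTensor k N f.toLinearMap
  have hχ : liftScalars χ = e.symm.toLinearMap := liftScalars.apply_symm_apply _
  have lift_ψ (w) : liftScalars (fN ∘ₗ ψ) (fM w) = fN (e w) :=
    liftScalars_comp_rTensor_algHom f fN (rTensor_algHom_smul (f.restrictScalars k)) ψ w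
  have lift_χ (w) : liftScalars (fM ∘ₗ χ) (fN w) = fM (e.symm w) :=
    (liftScalars_comp_rTensor_algHom (f.restrictScalars k) fM (rTensor_algHom_smul f) χ w).trans
      congr(fM ($hχ w))
  have left_inv : liftScalars (R := R) (fM ∘ₗ χ) ∘ₗ liftScalars (R := R) (fN ∘ₗ ψ) = .id := by
    ext m
    have := lift_χ (e (1 ⊗ₜ m))
    rw [e.symm_apply_apply] at this
    simpa [fM, e] using this
  have right_inv : liftScalars (R := R) (fN ∘ₗ ψ) ∘ₗ liftScalars (R := R) (fM ∘ₗ χ) = .id := by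
    ext n
    simpa [fN, χ] using lift_ψ (e.symm (1 ⊗ₜ n))
  exact Function.bijective_iff_has_inverse.2
    ⟨_, LinearMap.congr_fun left_inv, LinearMap.congr_fun right_inv⟩

end ChangeOfScalars

section ConvolutionTwist

variable {k R C : Type*} [CommSemiring k] [Semiring R] [Algebra k R]
  [AddCommMonoid C] [Module k C] [Coalgebra k C]

/-- The `R`-linear map `R ⊗ C → R ⊗ C`, `r ⊗ c ↦ r f(c₍₁₎) ⊗ c₍₂₎`, attached to a linear map `f`
from a coalgebra `C` to an algebra `R`. For `f = id` on a bialgebra `H` it is the Galois map of `H`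
coacting on itself. -/
noncomputable def convTwist (f : WithConv (C →ₗ[k] R)) : R ⊗[k] C →ₗ[R] R ⊗[k] C :=
  liftScalars (f.ofConv.rTensor C ∘ₗ Coalgebra.comul)

theorem liftScalars_comp_convTwist (f g : WithConv (C →ₗ[k] R)) :
    liftScalars g.ofConv ∘ₗ convTwist f = liftScalars (R := R) (f * g).ofConv := by
  have lift_rTensor : (liftScalars (R := R) g.ofConv).restrictScalars k ∘ₗ f.ofConv.rTensor C =
      LinearMap.mul' k R ∘ₗ TensorProduct.map f.ofConv g.ofConv := by
    ext c d
    simp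
  ext c
  simpa [convTwist] using congr($lift_rTensor (Coalgebra.comul c))

theorem isUnit_of_bijective_convTwist {f : WithConv (C →ₗ[k] R)}
    (hf : Function.Bijective (convTwist f)) : IsUnit f := by
  let e := LinearEquiv.ofBijective _ hf
  let lift : WithConv (C →ₗ[k] R) ≃ (R ⊗[k] C →ₗ[R] R) :=
    (WithConv.equiv _).trans liftScalars.toEquiv
  have lift_mul (g) : lift (f * g) = lift g ∘ₗ e.toLinearMap :=
    (liftScalars_comp_convTwist f g).symm
  refine IsUnit.isUnit_iff_mulLeft_bijective.2 ⟨fun g h hgh ↦ ?_, fun g ↦ ?_⟩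
  · have : lift g ∘ₗ e.toLinearMap = lift h ∘ₗ e.toLinearMap := by
      rw [← lift_mul, ← lift_mul]
      exact congrArg lift hgh
    exact lift.injective ((LinearMap.cancel_right e.surjective).1 this)
  · refine ⟨lift.symm (lift g ∘ₗ e.symm.toLinearMap), lift.injective ?_⟩
    simp [lift_mul, LinearMap.comp_assoc]

end ConvolutionTwist

section IncludeRight

variable {k A R C : Type*}

theorem assoc_comp_convTwist_includeRight [CommSemiring k] [Semiring A] [Algebra k A]
    [Semiring R] [Algebra k R] [AddCommMonoid C] [Module k C] [Coalgebra k C]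
    (f : WithConv (C →ₗ[k] R)) :
    (TensorProduct.assoc k A R C).toLinearMap ∘ₗ (convTwist (toConv
        (Algebra.TensorProduct.includeRight.toLinearMap ∘ₗ f.ofConv))).restrictScalars k =
      ((convTwist f).restrictScalars k).lTensor A ∘ₗ
        (TensorProduct.assoc k A R C).toLinearMap := by
  ext a r c
  have assoc_smul_rTensor : (TensorProduct.assoc k A R C).toLinearMap ∘ₗ
      (LinearMap.mulLeft k (a ⊗ₜ[k] r)).rTensor C ∘ₗ
      (Algebra.TensorProduct.includeRight.toLinearMap ∘ₗ f.ofConv).rTensor C =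
        TensorProduct.mk k A _ a ∘ₗ (LinearMap.mulLeft k r).rTensor C ∘ₗ f.ofConv.rTensor C := by
    ext c d
    simp
  exact congr($assoc_smul_rTensor (Coalgebra.comul c))

theorem bijective_convTwist_includeRight_iff [CommRing k] [Ring A] [Algebra k A]
    [Module.FaithfullyFlat k A] [Ring R] [Algebra k R] [AddCommGroup C] [Module k C]
    [Coalgebra k C] (f : WithConv (C →ₗ[k] R)) :
    Function.Bijective (convTwist (toConv
        ((Algebra.TensorProduct.includeRight : R →ₐ[k] A ⊗[k] R).toLinearMap ∘ₗ f.ofConv))) ↔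
      Function.Bijective (convTwist f) := by
  let α := TensorProduct.assoc k A R C
  have α_comp :
      α ∘ convTwist (toConv (Algebra.TensorProduct.includeRight.toLinearMap ∘ₗ f.ofConv)) =
        ((convTwist f).restrictScalars k).lTensor A ∘ α :=
    congr(⇑$(assoc_comp_convTwist_includeRight (A := A) f))
  rw [← Function.Bijective.of_comp_iff' α.bijective, α_comp,
    Function.Bijective.of_comp_iff _ α.bijective,
    Module.FaithfullyFlat.lTensor_bijective_iff_bijective, LinearMap.coe_restrictScalars]

end IncludeRight

section GaloisCoaction

variable {k B A H : Type*} [CommSemiring B]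

theorem convTwist_includeRight_comp_liftScalars [CommSemiring k] [Algebra k B]
    [Semiring A] [Algebra k A] [Algebra B A] [IsScalarTower k B A]
    [Semiring H] [Algebra k H] [Coalgebra k H] {δ : A →ₐ[B] A ⊗[k] H}
    (hcoassoc : (TensorProduct.assoc k A H H).toLinearMap ∘ₗ
        (δ.restrictScalars k).toLinearMap.rTensor H ∘ₗ (δ.restrictScalars k).toLinearMap =
      Coalgebra.comul.lTensor A ∘ₗ (δ.restrictScalars k).toLinearMap) :
    convTwist (toConv (Algebra.TensorProduct.includeRight : H →ₐ[k] A ⊗[k] H).toLinearMap) ∘ₗ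
      liftScalars (AlgebraTensorModule.rTensor k H
        (Algebra.TensorProduct.includeLeft : A →ₐ[B] A ⊗[k] H).toLinearMap ∘ₗ δ.toLinearMap) =
      liftScalars (R := A ⊗[k] H)
        (AlgebraTensorModule.rTensor k H δ.toLinearMap ∘ₗ δ.toLinearMap) := by
  have assoc_convTwist : (TensorProduct.assoc k A H H).toLinearMap ∘ₗ
      (convTwist (toConv Algebra.TensorProduct.includeRight.toLinearMap)).restrictScalars k ∘ₗ
        Algebra.TensorProduct.includeLeft.toLinearMap.rTensor H = Coalgebra.comul.lTensor A := by
    ext a h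
    simpa [convTwist, Algebra.TensorProduct.one_def] using
      congr($(assoc_comp_convTwist_includeRight (A := A) (toConv (.id : H →ₗ[k] H)))
        ((a ⊗ₜ 1) ⊗ₜ h))
  ext a
  apply (TensorProduct.assoc k A H H).injective
  simp only [AlgebraTensorModule.curry_apply, TensorProduct.curry_apply,
    LinearMap.coe_restrictScalars, LinearMap.comp_apply, liftScalars_tmul, one_smul]
  exact congr($assoc_convTwist (δ a)).trans congr($hcoassoc a).symm

theorem isUnit_toConv_id_of_bijective_galois [CommRing k] [Algebra k B]
    [Ring A] [Algebra k A] [Algebra B A] [IsScalarTower k B A] [Module.FaithfullyFlat k A]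
    [Ring H] [Algebra k H] [Coalgebra k H] {δ : A →ₐ[B] A ⊗[k] H}
    (hcoassoc : (TensorProduct.assoc k A H H).toLinearMap ∘ₗ
        (δ.restrictScalars k).toLinearMap.rTensor H ∘ₗ (δ.restrictScalars k).toLinearMap =
      Coalgebra.comul.lTensor A ∘ₗ (δ.restrictScalars k).toLinearMap)
    (hδ : Function.Bijective (liftScalars (R := A) δ.toLinearMap)) :
    IsUnit (toConv (LinearMap.id : H →ₗ[k] H)) := by
  refine isUnit_of_bijective_convTwist ((bijective_convTwist_includeRight_iff (A := A) _).1 ?_)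
  refine (Function.Bijective.of_comp_iff _ (bijective_liftScalars_rTensor_comp
    (Algebra.TensorProduct.includeLeft : A →ₐ[B] A ⊗[k] H) hδ)).1 ?_
  rw [← LinearMap.coe_comp, ofConv_toConv, LinearMap.comp_id,
    convTwist_includeRight_comp_liftScalars hcoassoc]
  exact bijective_liftScalars_rTensor_comp δ hδ

end GaloisCoaction

/-- Let `B` be a commutative `k`-algebra, `H` a `k`-bialgebra, and `A` a
`B`-algebra which is a right `H`-comodule algebra with `B`-linear coaction.  If `A` is
faithfully flat over `k` and the Galois map `β_A : A ⊗_B A → A ⊗_k H`,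
`β_A(x ⊗ y) = x·y₍₀₎ ⊗ y₍₁₎`, is bijective, then the bialgebra `H` admits an antipode,
i.e. `H` is a Hopf algebra. -/
theorem bialgebra_admitting_galois_extension_is_hopf
    (k B A H : Type) [CommRing k] [CommRing B] [Algebra k B]
    [Ring A] [Algebra k A] [Algebra B A] [IsScalarTower k B A]
    [Ring H] [Bialgebra k H] [Module.FaithfullyFlat k A]
    (δ : A →ₐ[k] A ⊗[k] H)
    (hcoassoc : (TensorProduct.assoc k A H H).toLinearMap ∘ₗ
        LinearMap.rTensor H δ.toLinearMap ∘ₗ δ.toLinearMap =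
      LinearMap.lTensor A (Coalgebra.comul (R := k) (A := H)) ∘ₗ δ.toLinearMap)
    (hcounit : (TensorProduct.rid k A).toLinearMap ∘ₗ
        LinearMap.lTensor A (Coalgebra.counit (R := k) (A := H)) ∘ₗ δ.toLinearMap =
      LinearMap.id)
    (hBlin : ∀ b : B, δ (algebraMap B A b) = (algebraMap B A b) ⊗ₜ[k] (1 : H))
    (βA : (A ⊗[B] A) →+ A ⊗[k] H)
    (hβA : ∀ x y : A, βA (x ⊗ₜ[B] y) = LinearMap.rTensor H (LinearMap.mulLeft k x) (δ y))
    (hbij : Function.Bijective βA) :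
    ∃ antipode : H →ₗ[k] H,
      (LinearMap.mul' k H ∘ₗ LinearMap.rTensor H antipode ∘ₗ
          Coalgebra.comul (R := k) (A := H) =
        Algebra.linearMap k H ∘ₗ Coalgebra.counit (R := k) (A := H)) ∧
      (LinearMap.mul' k H ∘ₗ LinearMap.lTensor H antipode ∘ₗ
          Coalgebra.comul (R := k) (A := H) =
        Algebra.linearMap k H ∘ₗ Coalgebra.counit (R := k) (A := H)) := by
  let δB : A →ₐ[B] A ⊗[k] H := { δ with commutes' := hBlin }
  have hβ : ⇑(liftScalars δB.toLinearMap) = βA := by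
    funext w
    induction w with
    | zero => simp
    | add v w hv hw => simp only [map_add, hv, hw]
    | tmul x y => exact (hβA x y).symm
  obtain ⟨⟨_, S, id_mul_S, S_mul_id⟩, rfl⟩ :=
    isUnit_toConv_id_of_bijective_galois (δ := δB) hcoassoc (hβ ▸ hbij)
  exact ⟨S.ofConv, congr(($S_mul_id).ofConv), congr(($id_mul_S).ofConv)⟩
end

section
/- Let k be a commutative ring and S a k-algebra which is faithfully flat as a k-module. Let M be a left S-module equipped with an S/k-descent datum D, and set ᴰM := { m ∈ M | D(m) = 1 ⊗ m }. Then for every m ∈ M the element D(m) ∈ S ⊗ M lies in the image of S ⊗ ᴰM, and the map f : S ⊗_k ᴰM → M, f(s ⊗ m) = s·m, is bijective with inverse induced by D (i.e. f(D(m)) = m for all m ∈ M and D(f(s ⊗ m)) = s ⊗ m for all s ∈ S, m ∈ ᴰM). -/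
open scoped TensorProduct

/-- The action map `S ⊗[k] M → M`, `s ⊗ m ↦ s • m`, for a left `S`-module `M`. -/
noncomputable def actionMap (k S M : Type) [CommRing k] [Ring S] [Algebra k S]
    [AddCommGroup M] [Module k M] [Module S M] [IsScalarTower k S M] :
    (S ⊗[k] M) →ₗ[k] M :=
  TensorProduct.lift ((Algebra.lsmul k (A := S) k M).toLinearMap)

/-!
By flatness, `S ⊗ -` preserves the equalizer `ᴰM` of `D` and `m ↦ 1 ⊗ m`. Coassociativity says that
`D m` lies in the equalizer of the two tensored maps, hence in `S ⊗ ᴰM ⊆ S ⊗ M`. By `S`-linearity,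
`D ∘ f` is the inclusion `S ⊗ ᴰM → S ⊗ M`, so `f` is injective; it is surjective because `D`, being
split by the action map, is injective.
-/

section

variable {k S M N : Type*} [CommSemiring k] [Semiring S] [Algebra k S]
  [AddCommMonoid M] [Module k M] [Module S M] [IsScalarTower k S M] [AddCommMonoid N] [Module k N]

variable (S) in
/-- The `S`-linear extension `S ⊗[k] N → M`, `s ⊗ n ↦ s • g n`, of a `k`-linear map `g : N → M`.
This is `LinearMap.liftBaseChange` for an `S` that need not be commutative. -/
noncomputable def extendScalars (g : N →ₗ[k] M) : S ⊗[k] N →ₗ[S] M :=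
  TensorProduct.AlgebraTensorModule.lift (LinearMap.toSpanSingleton S (N →ₗ[k] M) g)

@[simp]
theorem extendScalars_tmul (g : N →ₗ[k] M) (s : S) (n : N) :
    extendScalars S g (s ⊗ₜ n) = s • g n :=
  rfl

/-- The `k`-submodule `ᴰM = { m | D m = 1 ⊗ m }` of `M`, to which `M` descends, presented as an
equalizer because flat base change preserves equalizers. -/
def descentInvariants (D : M →ₗ[S] S ⊗[k] M) : Submodule k M :=
  LinearMap.eqLocus (D.restrictScalars k) (TensorProduct.mk k S M 1)

theorem apply_extendScalars_eq_lTensor (D : M →ₗ[S] S ⊗[k] M) {g : N →ₗ[k] M}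
    (hg : ∀ n, D (g n) = 1 ⊗ₜ g n) (w : S ⊗[k] N) :
    D (extendScalars S g w) = g.lTensor S w := by
  induction w with
  | zero => simp only [map_zero]
  | add x y hx hy => simp only [map_add, hx, hy]
  | tmul s n =>
    rw [extendScalars_tmul, map_smul, hg, TensorProduct.smul_tmul', smul_eq_mul, mul_one,
      LinearMap.lTensor_tmul]

end

section

variable {k S M : Type*} [CommRing k] [Ring S] [Algebra k S] [Module.Flat k S]
  [AddCommGroup M] [Module k M] [Module S M] [IsScalarTower k S M] (D : M →ₗ[S] S ⊗[k] M)

theorem injective_extendScalars {N : Type*} [AddCommGroup N] [Module k N] {g : N →ₗ[k] M}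
    (hg : Function.Injective g) (hDg : ∀ n, D (g n) = 1 ⊗ₜ g n) :
    Function.Injective (extendScalars S g) := by
  have D_comp_extend : D ∘ extendScalars S g = g.lTensor S :=
    funext (apply_extendScalars_eq_lTensor D hDg)
  refine Function.Injective.of_comp (f := D) ?_
  rw [D_comp_extend]
  exact Module.Flat.lTensor_preserves_injective_linearMap g hg

theorem mem_range_lTensor_descentInvariants_iff (x : S ⊗[k] M) :
    x ∈ LinearMap.range ((descentInvariants D).subtype.lTensor S) ↔
      (D.restrictScalars k).lTensor S x = (TensorProduct.mk k S M 1).lTensor S x :=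
  SetLike.ext_iff.mp (Module.Flat.eqLocus_lTensor_eq k S _ _).symm x

theorem faithfully_flat_descent_general
    (hcoassoc : ∀ m, (D.restrictScalars k).lTensor S (D m) =
      (TensorProduct.mk k S M 1).lTensor S (D m))
    (hinj : Function.Injective D) :
    (∀ m, D m ∈ LinearMap.range ((descentInvariants D).subtype.lTensor S)) ∧
    Function.Bijective (extendScalars S (descentInvariants D).subtype) ∧
    ∀ w, D (extendScalars S (descentInvariants D).subtype w) =
      (descentInvariants D).subtype.lTensor S w := by
  have range_D m := (mem_range_lTensor_descentInvariants_iff D (D m)).mpr (hcoassoc m)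
  have D_invariant (n : descentInvariants D) : D n = 1 ⊗ₜ (n : M) := n.property
  have D_extend :=
    apply_extendScalars_eq_lTensor D (g := (descentInvariants D).subtype) D_invariant
  refine ⟨range_D, ⟨?injective, ?surjective⟩, D_extend⟩
  case injective =>
    exact injective_extendScalars D (Submodule.subtype_injective _) D_invariant
  case surjective =>
    intro m
    obtain ⟨w, hw⟩ := range_D m
    exact ⟨w, hinj ((D_extend w).trans hw)⟩

end

theorem actionMap_comp_lTensor {k S M N : Type} [CommRing k] [Ring S] [Algebra k S]
    [AddCommGroup M] [Module k M] [Module S M] [IsScalarTower k S M] [AddCommMonoid N] [Module k N]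
    (g : N →ₗ[k] M) :
    actionMap k S M ∘ₗ g.lTensor S = (extendScalars S g).restrictScalars k :=
  TensorProduct.ext' fun _ _ ↦ rfl

/-- Faithfully flat descent: Let `S` be a `k`-algebra, faithfully flat as a
`k`-module, and `(M, D)` an `S/k`-descent datum.  With `ᴰM = { m ∈ M | D m = 1 ⊗ m }`,
every `D m` lies in the image of `S ⊗ ᴰM`, and the map `f : S ⊗ ᴰM → M`, `s ⊗ m ↦ s • m`,
is bijective with inverse induced by `D`. -/
theorem faithfully_flat_descent (k S M : Type) [CommRing k] [Ring S] [Algebra k S]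
    [Module.FaithfullyFlat k S]
    [AddCommGroup M] [Module k M] [Module S M] [IsScalarTower k S M]
    (D : M →ₗ[S] S ⊗[k] M)
    (hD1 : ∀ m : M, LinearMap.lTensor S (D.restrictScalars k) (D m) =
      LinearMap.lTensor S (TensorProduct.mk k S M 1) (D m))
    (hD2 : ∀ m : M, actionMap k S M (D m) = m) :
    (∀ m : M,
      D m ∈ LinearMap.range
        (LinearMap.lTensor S (LinearMap.ker
          ((D.restrictScalars k) - TensorProduct.mk k S M 1)).subtype)) ∧
    Function.Bijective
      (actionMap k S M ∘ₗ
        LinearMap.lTensor S (LinearMap.ker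
          ((D.restrictScalars k) - TensorProduct.mk k S M 1)).subtype) ∧
    (∀ w : S ⊗[k] ↥(LinearMap.ker ((D.restrictScalars k) - TensorProduct.mk k S M 1)),
      D ((actionMap k S M ∘ₗ
          LinearMap.lTensor S (LinearMap.ker
            ((D.restrictScalars k) - TensorProduct.mk k S M 1)).subtype) w) =
        LinearMap.lTensor S (LinearMap.ker
          ((D.restrictScalars k) - TensorProduct.mk k S M 1)).subtype w) := by
  rw [actionMap_comp_lTensor, ← LinearMap.eqLocus_eq_ker_sub]
  exact faithfully_flat_descent_general D hD1 (Function.LeftInverse.injective hD2)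
end

section
/- Let k be a commutative ring, B a commutative k-algebra, H a k-bialgebra, and A a B-algebra (so B maps centrally into A) which is also a right H-comodule algebra with B-linear coaction. Assume A is faithfully flat as a k-module and that the Galois map β_A : A ⊗_B A → A ⊗_k H, β_A(x ⊗ y) = x·y₍₀₎ ⊗ y₍₁₎, is bijective. Then the map β_H : H ⊗ H → H ⊗ H, β_H(g ⊗ h) = g·h₍₁₎ ⊗ h₍₂₎, is bijective. -/
open scoped TensorProduct

/-!
Write `β` for the Galois map of `A` and number tensor factors by subscripts. On `A ⊗ A ⊗ A`,
balanced over `B`, coassociativity of the coaction `δ` and its multiplicativity give the pentagon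
identity `(A ⊗ β_H) ∘ β₁₃ ∘ β₁₂ = β₁₂ ∘ β₂₃`, both sides sending `x ⊗ y ⊗ z` to
`x·y₍₀₎·z₍₀₎ ⊗ y₍₁₎·z₍₁₎ ⊗ z₍₂₎`. As `β` is bijective, so is `A ⊗ β_H`, and faithful flatness
of `A` descends this to `β_H`.
-/

section Bijections

variable {k B A H : Type*} [CommSemiring k] [CommSemiring B] [Algebra k B]
  [AddCommMonoid A] [Module k A] [Module B A] [IsScalarTower k B A]
  [AddCommMonoid H] [Module k H]

/-- The composite `β₁₂ ∘ β₂₃` on `A ⊗ A ⊗ A`, for a bijective Galois map `β`: first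
`β` on the last two factors, then `β` on the first two factors. The reassociation in between
moves the factor `H` past the balancing over `B`. -/
noncomputable def galoisEquiv₁₂Comp₂₃ (β : A ⊗[B] A ≃ₗ[B] A ⊗[k] H) :
    A ⊗[B] (A ⊗[B] A) ≃ₗ[B] A ⊗[k] (H ⊗[k] H) :=
  (TensorProduct.congr (.refl B A) β) ≪≫ₗ
    (TensorProduct.AlgebraTensorModule.assoc k B B A A H).symm ≪≫ₗ
    TensorProduct.AlgebraTensorModule.congr β (.refl k H) ≪≫ₗ
    TensorProduct.AlgebraTensorModule.assoc k k B A H H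

/-- The composite `β₁₃ ∘ β₁₂` on `A ⊗ A ⊗ A`, for a bijective Galois map `β`: first
`β` on the first two factors, then `β` on the first and the third factor. -/
noncomputable def galoisEquiv₁₃Comp₁₂ (β : A ⊗[B] A ≃ₗ[B] A ⊗[k] H) :
    (A ⊗[B] A) ⊗[B] A ≃ₗ[B] A ⊗[k] (H ⊗[k] H) :=
  (TensorProduct.congr β (.refl B A)) ≪≫ₗ
    (TensorProduct.AlgebraTensorModule.rightComm k B B A A H).symm ≪≫ₗ
    TensorProduct.AlgebraTensorModule.congr β (.refl k H) ≪≫ₗ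
    TensorProduct.AlgebraTensorModule.rightComm k k B A H H ≪≫ₗ
    TensorProduct.AlgebraTensorModule.assoc k k B A H H

end Bijections

section GaloisMap

variable {k B A H : Type*} [CommSemiring k] [CommSemiring B] [Algebra k B]
  [Semiring A] [Algebra k A] [Algebra B A] [IsScalarTower k B A] [Semiring H] [Algebra k H]

theorem rTensor_mulLeft_apply (x : A) (t : A ⊗[k] H) :
    LinearMap.rTensor H (LinearMap.mulLeft k x) t = (x ⊗ₜ[k] 1) * t := by
  rw [← LinearMap.mulLeft_apply k (x ⊗ₜ[k] (1 : H)) t, LinearMap.mulLeft_tmul,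
    LinearMap.mulLeft_one, LinearMap.rTensor]

theorem galoisMap_smul {δ : A → A ⊗[k] H} {β : (A ⊗[B] A) →+ A ⊗[k] H}
    (hβ : ∀ x y, β (x ⊗ₜ[B] y) = (x ⊗ₜ[k] 1) * δ y) (b : B) (t : A ⊗[B] A) :
    β (b • t) = b • β t := by
  induction t with
  | zero => simp only [smul_zero, map_zero]
  | add s t hs ht => simp only [smul_add, map_add, hs, ht]
  | tmul x y => rw [TensorProduct.smul_tmul', hβ, hβ, ← TensorProduct.smul_tmul', smul_mul_assoc]

/-- A bijective Galois map as a `B`-linear equivalence. -/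
noncomputable def galoisEquiv {δ : A → A ⊗[k] H} (β : (A ⊗[B] A) →+ A ⊗[k] H)
    (hβ : ∀ x y, β (x ⊗ₜ[B] y) = (x ⊗ₜ[k] 1) * δ y) (hbij : Function.Bijective β) :
    A ⊗[B] A ≃ₗ[B] A ⊗[k] H :=
  .ofBijective { β with map_smul' := galoisMap_smul hβ } hbij

theorem galoisEquiv₁₂Comp₂₃_tmul {δ : A →ₐ[k] A ⊗[k] H} {β : A ⊗[B] A ≃ₗ[B] A ⊗[k] H}
    (hβ : ∀ x y, β (x ⊗ₜ[B] y) = (x ⊗ₜ[k] 1) * δ y) (x y z : A) :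
    galoisEquiv₁₂Comp₂₃ β (x ⊗ₜ[B] (y ⊗ₜ[B] z)) =
      Algebra.TensorProduct.assoc k k k A H H
        ((β (x ⊗ₜ[B] y) ⊗ₜ[k] 1) * LinearMap.rTensor H δ.toLinearMap (δ z)) := by
  suffices ∀ t : A ⊗[k] H,
      TensorProduct.AlgebraTensorModule.congr β (.refl k H)
          ((TensorProduct.AlgebraTensorModule.assoc k B B A A H).symm
            (x ⊗ₜ[B] ((y ⊗ₜ[k] 1) * t))) =
        (β (x ⊗ₜ[B] y) ⊗ₜ[k] 1) * LinearMap.rTensor H δ.toLinearMap t by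
    simpa only [← hβ] using!
      congrArg (Algebra.TensorProduct.assoc k k k A H H) (this (δ z))
  intro t
  induction t with
  | zero => simp
  | add s t hs ht => simp only [mul_add, TensorProduct.tmul_add, map_add, hs, ht]
  | tmul a h => simp [hβ, mul_assoc]

end GaloisMap

section Pentagon

variable {k A H : Type} {B : Type*} [CommRing k] [CommRing B] [Algebra k B]
  [Ring A] [Algebra k A] [Algebra B A] [IsScalarTower k B A] [Ring H] [Algebra k H]

theorem coactionGalois_tmul (δ : A →ₗ[k] A ⊗[k] H) (x y : A) :
    coactionGalois k A H δ (x ⊗ₜ[k] y) = (x ⊗ₜ[k] 1) * δ y := by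
  simp only [coactionGalois, LinearMap.comp_apply, LinearMap.lTensor_tmul, LinearEquiv.coe_coe]
  induction δ y with
  | zero => simp
  | add s t hs ht => simp only [TensorProduct.tmul_add, mul_add, map_add, hs, ht]
  | tmul a h => simp

theorem lTensor_coactionGalois_assoc_rightComm (Δ : H →ₗ[k] H ⊗[k] H)
    (a : A) (h : H) (t : A ⊗[k] H) :
    LinearMap.lTensor A (coactionGalois k H H Δ)
        (TensorProduct.assoc k A H H
          (TensorProduct.rightComm k A H H (((a ⊗ₜ[k] 1) * t) ⊗ₜ[k] h))) =
      (a ⊗ₜ[k] (h ⊗ₜ[k] 1)) * LinearMap.lTensor A Δ t := by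
  induction t with
  | zero => simp
  | add s t hs ht => simp only [mul_add, TensorProduct.add_tmul, map_add, hs, ht]
  | tmul c g => simp [coactionGalois_tmul]

theorem lTensor_coactionGalois_galoisEquiv₁₃Comp₁₂_tmul {δ : A → A ⊗[k] H}
    {β : A ⊗[B] A ≃ₗ[B] A ⊗[k] H}
    (hβ : ∀ x y, β (x ⊗ₜ[B] y) = (x ⊗ₜ[k] 1) * δ y)
    (Δ : H →ₗ[k] H ⊗[k] H) (x y z : A) :
    LinearMap.lTensor A (coactionGalois k H H Δ)
        (galoisEquiv₁₃Comp₁₂ β ((x ⊗ₜ[B] y) ⊗ₜ[B] z)) =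
      Algebra.TensorProduct.assoc k k k A H H (β (x ⊗ₜ[B] y) ⊗ₜ[k] 1) *
        LinearMap.lTensor A Δ (δ z) := by
  suffices ∀ w : A ⊗[k] H, LinearMap.lTensor A (coactionGalois k H H Δ)
      (TensorProduct.assoc k A H H (TensorProduct.rightComm k A H H
        (TensorProduct.AlgebraTensorModule.congr β (.refl k H)
          ((TensorProduct.AlgebraTensorModule.rightComm k B B A A H).symm (w ⊗ₜ[B] z))))) =
      Algebra.TensorProduct.assoc k k k A H H (w ⊗ₜ[k] 1) * LinearMap.lTensor A Δ (δ z) from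
    this (β (x ⊗ₜ[B] y))
  intro w
  induction w with
  | zero => simp
  | add s t hs ht => simp only [TensorProduct.add_tmul, map_add, add_mul, hs, ht]
  | tmul a h => simpa [hβ] using lTensor_coactionGalois_assoc_rightComm Δ a h (δ z)

theorem galois_pentagon {δ : A →ₐ[k] A ⊗[k] H} {Δ : H →ₗ[k] H ⊗[k] H}
    (hcoassoc : (TensorProduct.assoc k A H H).toLinearMap ∘ₗ
        LinearMap.rTensor H δ.toLinearMap ∘ₗ δ.toLinearMap =
      LinearMap.lTensor A Δ ∘ₗ δ.toLinearMap)
    {β : A ⊗[B] A ≃ₗ[B] A ⊗[k] H}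
    (hβ : ∀ x y, β (x ⊗ₜ[B] y) = (x ⊗ₜ[k] 1) * δ y) (t : (A ⊗[B] A) ⊗[B] A) :
    LinearMap.lTensor A (coactionGalois k H H Δ) (galoisEquiv₁₃Comp₁₂ β t) =
      galoisEquiv₁₂Comp₂₃ β (TensorProduct.assoc B A A A t) := by
  induction t with
  | zero => simp only [map_zero]
  | add s t hs ht => simp only [map_add, hs, ht]
  | tmul s z =>
    induction s with
    | zero => simp only [TensorProduct.zero_tmul, map_zero]
    | add u v hu hv => simp only [TensorProduct.add_tmul, map_add, hu, hv]
    | tmul x y =>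
      calc
        _ = Algebra.TensorProduct.assoc k k k A H H (β (x ⊗ₜ[B] y) ⊗ₜ[k] 1) *
              LinearMap.lTensor A Δ (δ z) :=
          lTensor_coactionGalois_galoisEquiv₁₃Comp₁₂_tmul hβ Δ x y z
        _ = Algebra.TensorProduct.assoc k k k A H H (β (x ⊗ₜ[B] y) ⊗ₜ[k] 1) *
              Algebra.TensorProduct.assoc k k k A H H
                (LinearMap.rTensor H δ.toLinearMap (δ z)) :=
          congrArg _ (LinearMap.congr_fun hcoassoc z).symm
        _ = Algebra.TensorProduct.assoc k k k A H H
              ((β (x ⊗ₜ[B] y) ⊗ₜ[k] 1) * LinearMap.rTensor H δ.toLinearMap (δ z)) :=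
          (map_mul _ _ _).symm
        _ = galoisEquiv₁₂Comp₂₃ β (x ⊗ₜ[B] (y ⊗ₜ[B] z)) :=
          (galoisEquiv₁₂Comp₂₃_tmul hβ x y z).symm

theorem lTensor_coactionGalois_bijective {δ : A →ₐ[k] A ⊗[k] H} {Δ : H →ₗ[k] H ⊗[k] H}
    (hcoassoc : (TensorProduct.assoc k A H H).toLinearMap ∘ₗ
        LinearMap.rTensor H δ.toLinearMap ∘ₗ δ.toLinearMap =
      LinearMap.lTensor A Δ ∘ₗ δ.toLinearMap)
    {β : A ⊗[B] A ≃ₗ[B] A ⊗[k] H}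
    (hβ : ∀ x y, β (x ⊗ₜ[B] y) = (x ⊗ₜ[k] 1) * δ y) :
    Function.Bijective (LinearMap.lTensor A (coactionGalois k H H Δ)) := by
  have pentagon : LinearMap.lTensor A (coactionGalois k H H Δ) ∘ galoisEquiv₁₃Comp₁₂ β =
      galoisEquiv₁₂Comp₂₃ β ∘ TensorProduct.assoc B A A A :=
    funext (galois_pentagon hcoassoc hβ)
  rw [← Function.Bijective.of_comp_iff _ (galoisEquiv₁₃Comp₁₂ β).bijective, pentagon]
  exact (galoisEquiv₁₂Comp₂₃ β).bijective.comp (TensorProduct.assoc B A A A).bijective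

end Pentagon

theorem galois_extension_implies_betaH_bijective_general
    (k : Type) (B : Type*) (A H : Type) [CommRing k] [CommRing B] [Algebra k B]
    [Ring A] [Algebra k A] [Algebra B A] [IsScalarTower k B A]
    [Ring H] [Algebra k H] [Module.FaithfullyFlat k A]
    (δ : A →ₐ[k] A ⊗[k] H) (Δ : H →ₗ[k] H ⊗[k] H)
    (hcoassoc : (TensorProduct.assoc k A H H).toLinearMap ∘ₗ
        LinearMap.rTensor H δ.toLinearMap ∘ₗ δ.toLinearMap =
      LinearMap.lTensor A Δ ∘ₗ δ.toLinearMap)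
    (βA : (A ⊗[B] A) →+ A ⊗[k] H)
    (hβA : ∀ x y : A, βA (x ⊗ₜ[B] y) = LinearMap.rTensor H (LinearMap.mulLeft k x) (δ y))
    (hbij : Function.Bijective βA) :
    Function.Bijective (coactionGalois k H H Δ) := by
  have hβ (x y : A) : βA (x ⊗ₜ[B] y) = (x ⊗ₜ[k] 1) * δ y :=
    (hβA x y).trans (rTensor_mulLeft_apply x (δ y))
  rw [← Module.FaithfullyFlat.lTensor_bijective_iff_bijective k A]
  exact lTensor_coactionGalois_bijective hcoassoc (β := galoisEquiv βA hβ hbij) hβ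

/-- Let `B` be a commutative `k`-algebra, `H` a `k`-bialgebra, and `A` a
`B`-algebra which is a right `H`-comodule algebra with `B`-linear coaction.  If `A` is
faithfully flat over `k` and the Galois map `β_A : A ⊗_B A → A ⊗_k H`,
`β_A(x ⊗ y) = x·y₍₀₎ ⊗ y₍₁₎`, is bijective, then the map `β_H : H ⊗ H → H ⊗ H`,
`β_H(g ⊗ h) = g·h₍₁₎ ⊗ h₍₂₎`, is bijective. -/
theorem galois_extension_implies_betaH_bijective
    (k B A H : Type) [CommRing k] [CommRing B] [Algebra k B]
    [Ring A] [Algebra k A] [Algebra B A] [IsScalarTower k B A]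
    [Ring H] [Bialgebra k H] [Module.FaithfullyFlat k A]
    (δ : A →ₐ[k] A ⊗[k] H)
    (hcoassoc : (TensorProduct.assoc k A H H).toLinearMap ∘ₗ
        LinearMap.rTensor H δ.toLinearMap ∘ₗ δ.toLinearMap =
      LinearMap.lTensor A (Coalgebra.comul (R := k) (A := H)) ∘ₗ δ.toLinearMap)
    (hcounit : (TensorProduct.rid k A).toLinearMap ∘ₗ
        LinearMap.lTensor A (Coalgebra.counit (R := k) (A := H)) ∘ₗ δ.toLinearMap =
      LinearMap.id)
    (hBlin : ∀ b : B, δ (algebraMap B A b) = (algebraMap B A b) ⊗ₜ[k] (1 : H))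
    (βA : (A ⊗[B] A) →+ A ⊗[k] H)
    (hβA : ∀ x y : A, βA (x ⊗ₜ[B] y) = LinearMap.rTensor H (LinearMap.mulLeft k x) (δ y))
    (hbij : Function.Bijective βA) :
    Function.Bijective
      (coactionGalois k H H (Coalgebra.comul (R := k) (A := H))) :=
  galois_extension_implies_betaH_bijective_general k B A H δ Coalgebra.comul hcoassoc βA hβA hbij
end
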